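/- arXiv:math/9504209 — 2 statements merged into one kernel-verified Lean document; each statement's English description precedes it below -/
import Mathlib

section
/- Let A, B ∈ SL(2,ℂ) generate a discrete subgroup whose image in PSL(2,ℂ) is not isomorphic to DihedralGroup m for any m : ℕ, let A be elliptic of order n ≥ 3, and suppose γ(A,B) = β(A) (so the parameter triple of ⟨A,B⟩ is (β(A), β(A), β(B))). Then for every C ∈ SL(2,ℂ), max{‖C·A·C⁻¹‖², ‖C·B·C⁻¹‖²} ≥ 2·t(n). -/
open Matrix Real

noncomputable section

abbrev SL2C := Matrix.SpecialLinearGroup (Fin 2) ℂ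

/-- The Frobenius (Hilbert–Schmidt) norm of a 2×2 complex matrix. -/
def fnorm (A : Matrix (Fin 2) (Fin 2) ℂ) : ℝ :=
  @norm _ Matrix.frobeniusSeminormedAddCommGroup.toNorm A

instance : TopologicalSpace SL2C :=
  TopologicalSpace.induced (fun g => (g : Matrix (Fin 2) (Fin 2) ℂ)) inferInstance

/-- A subgroup of `SL(2,ℂ)` is discrete if it is a discrete subspace of `SL(2,ℂ)`. -/
def IsDiscreteSubgroup (Γ : Subgroup SL2C) : Prop := DiscreteTopology Γ

/-- `A` is elliptic of order `n`: `A^n = ±1` but `A^k ≠ ±1` for `1 ≤ k < n`. -/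
def IsEllipticOfOrder (A : SL2C) (n : ℕ) : Prop :=
  (A ^ n = 1 ∨ A ^ n = -1) ∧ ∀ k : ℕ, 1 ≤ k → k < n → A ^ k ≠ 1 ∧ A ^ k ≠ -1

/-- `A` is parabolic: `A ≠ ±1` and `tr A = ±2`. -/
def IsParabolic (A : SL2C) : Prop :=
  A ≠ 1 ∧ A ≠ -1 ∧ (Matrix.trace (A : Matrix (Fin 2) (Fin 2) ℂ) = 2 ∨
    Matrix.trace (A : Matrix (Fin 2) (Fin 2) ℂ) = -2)

/-- `S` and `T` have a common eigenvector in `ℂ²`. -/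
def HasCommonEigenvector (S T : SL2C) : Prop :=
  ∃ v : Fin 2 → ℂ, v ≠ 0 ∧ (∃ a : ℂ, (S : Matrix (Fin 2) (Fin 2) ℂ).mulVec v = a • v) ∧
    (∃ b : ℂ, (T : Matrix (Fin 2) (Fin 2) ℂ).mulVec v = b • v)

/-- A subgroup of `SL(2,ℂ)` is nonelementary if it contains two elements `S`, `T`
with `S^k ≠ ±1 ≠ T^k` for all `k ≥ 1` having no common eigenvector in `ℂ²`. -/
def IsNonelementary (Γ : Subgroup SL2C) : Prop :=
  ∃ S ∈ Γ, ∃ T ∈ Γ, (∀ k : ℕ, 1 ≤ k → S ^ k ≠ 1 ∧ S ^ k ≠ -1) ∧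
    (∀ k : ℕ, 1 ≤ k → T ^ k ≠ 1 ∧ T ^ k ≠ -1) ∧ ¬ HasCommonEigenvector S T

/-- The trace parameter `β(A) = tr²(A) - 4`. -/
def βp (A : SL2C) : ℂ := (Matrix.trace (A : Matrix (Fin 2) (Fin 2) ℂ)) ^ 2 - 4

/-- The commutator parameter `γ(A,B) = tr [A,B] - 2`. -/
def γp (A B : SL2C) : ℂ :=
  Matrix.trace ((A * B * A⁻¹ * B⁻¹ : SL2C) : Matrix (Fin 2) (Fin 2) ℂ) - 2

/-- `PSL(2,ℂ)`, the quotient of `SL(2,ℂ)` by its center `{1, -1}`. -/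
abbrev PSL2C := SL2C ⧸ Subgroup.center SL2C

/-- The image in `PSL(2,ℂ)` of a subgroup of `SL(2,ℂ)`. -/
def pslImage (Γ : Subgroup SL2C) : Subgroup PSL2C :=
  Γ.map (QuotientGroup.mk' (Subgroup.center SL2C))

open Classical in
/-- `t5`: the unique real `t > 1` with
`t (t - cos²(π/5)) + (t-1) √((t+1)(t+1-2 cos²(π/5))) = 1/2`. -/
def t5 : ℝ :=
  if h : ∃ t : ℝ, 1 < t ∧
      t * (t - Real.cos (π / 5) ^ 2) +
        (t - 1) * Real.sqrt ((t + 1) * (t + 1 - 2 * Real.cos (π / 5) ^ 2)) = 1 / 2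
  then h.choose else 0

/-- The value `t n = cosh (c n)` where `c n` is the sharp displacement bound for
discrete nonelementary groups with an elliptic generator of order `n ≥ 3`. -/
def tOf : ℕ → ℝ
  | 3 => (2 * Real.sqrt (8 + 2 * Real.sqrt 5) - (1 + Real.sqrt 5)) / (6 - Real.sqrt 5)
  | 4 => (Real.sqrt (6 + 2 * Real.sqrt 3) - Real.sqrt 3) / (3 - Real.sqrt 3)
  | 5 => t5
  | 6 => 17 / 16
  | n => (5 - 2 * Real.sin (π / n) ^ 2) / (4 + 2 * Real.sin (π / n) ^ 2)

/-!
By Fricke's identity for `tr [A, B]`, with `tr A = a + a⁻¹` the equation `γ(A, B) = β(A)` factors as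
`(tr AB - a tr B) (tr AB - a⁻¹ tr B) = 0`. Since `a² ≠ 1`, up to inverting `a` and conjugating the
group, `A = diag(a, a⁻¹)` and `B = [[p, 1], [-1, 0]]` with `p = tr B`; here `p = 0` would make the
image in `PSL(2, ℂ)` dihedral. Then `A (B A B⁻¹)` is the translation by `(1 - a²) p`. The
translations in the discrete group form a discrete subgroup of `ℂ` stable under multiplication by
`a²`, a primitive `n`-th root of unity, so `n ∈ {3, 4, 6}`, and the Shimizu–Leutbecher lemma applied
to `B²` gives `|1 - a²| |p|² ≥ 1`. The Frobenius norms of the conjugates are explicit in the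
coordinates of a point of upper half-space, and with this bound on `p` the displacement estimate
comes down to the positivity of a quadratic form.
-/

open Filter Topology
open Matrix.SpecialLinearGroup (diag2 diag2_coe diag2_coe' coe_mul coe_inv coe_neg coe_one coe_pow)
open scoped MatrixGroups

section DihedralGroups

variable {G : Type*} [Group G]

/-- The homomorphism `i ↦ x ^ i` out of `ZMod n`, for an element `x` with `x ^ n = 1`. -/
def zmodPowHom {x : G} {n : ℕ} (hx : x ^ n = 1) : Multiplicative (ZMod n) →* G :=
  AddMonoidHom.toMultiplicativeLeft
    (ZMod.lift n ⟨zmultiplesHom (Additive G) (.ofMul x), by simp [← ofMul_pow, hx]⟩)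

lemma zmodPowHom_intCast {x : G} {n : ℕ} (hx : x ^ n = 1) (i : ℤ) :
    zmodPowHom hx (.ofAdd (i : ZMod n)) = x ^ i :=
  congrArg Additive.toMul (ZMod.lift_coe n _ i)

lemma zpow_mul_eq_mul_zpow_neg {x y : G} (hxy : x * y * x = y) (i : ℤ) :
    x ^ i * y = y * x ^ (-i) := by
  have h : SemiconjBy y x⁻¹ x := by
    rw [SemiconjBy, mul_inv_eq_iff_eq_mul, hxy]
  simpa using ((h.zpow_right i).eq).symm

/-- The homomorphism `r i ↦ x ^ i`, `sr i ↦ y * x ^ i` out of `DihedralGroup n`, for elements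
satisfying the dihedral relations. -/
def dihedralHom {x y : G} {n : ℕ} (hx : x ^ n = 1) (hy : y * y = 1) (hxy : x * y * x = y) :
    DihedralGroup n →* G :=
  MonoidHom.mk' (fun
    | .r i => zmodPowHom hx (.ofAdd i)
    | .sr i => y * zmodPowHom hx (.ofAdd i)) <| by
  have hcomm (i j : ℤ) : x ^ i * (y * x ^ j) = y * x ^ (j - i) := by
    rw [← mul_assoc, zpow_mul_eq_mul_zpow_neg hxy, mul_assoc, ← _root_.zpow_add, neg_add_eq_sub]
  rintro (i | i) (j | j) <;> obtain ⟨i, rfl⟩ := ZMod.intCast_surjective i <;>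
    obtain ⟨j, rfl⟩ := ZMod.intCast_surjective j <;>
    simp only [DihedralGroup.r_mul_r, DihedralGroup.r_mul_sr, DihedralGroup.sr_mul_r,
      DihedralGroup.sr_mul_sr, ← Int.cast_add, ← Int.cast_sub, zmodPowHom_intCast]
  · exact _root_.zpow_add x i j
  · exact (hcomm i j).symm
  · rw [_root_.zpow_add, mul_assoc]
  · rw [mul_assoc, hcomm, ← mul_assoc, hy, one_mul]

section

variable {x y : G} {n : ℕ} (hx : x ^ n = 1) (hy : y * y = 1) (hxy : x * y * x = y)

lemma dihedralHom_r (i : ℤ) : dihedralHom hx hy hxy (.r i) = x ^ i :=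
  zmodPowHom_intCast hx i

lemma dihedralHom_sr (i : ℤ) : dihedralHom hx hy hxy (.sr i) = y * x ^ i :=
  congrArg (y * ·) (zmodPowHom_intCast hx i)

lemma range_dihedralHom : (dihedralHom hx hy hxy).range = Subgroup.closure {x, y} := by
  apply le_antisymm
  · have hx' : x ∈ Subgroup.closure {x, y} := Subgroup.subset_closure (by simp)
    have hy' : y ∈ Subgroup.closure {x, y} := Subgroup.subset_closure (by simp)
    rintro _ ⟨i | i, rfl⟩ <;> obtain ⟨i, rfl⟩ := ZMod.intCast_surjective i
    · exact dihedralHom_r hx hy hxy i ▸ Subgroup.zpow_mem _ hx' i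
    · exact dihedralHom_sr hx hy hxy i ▸ Subgroup.mul_mem _ hy' (Subgroup.zpow_mem _ hx' i)
  · rw [Subgroup.closure_le]
    rintro _ (rfl | rfl)
    · exact ⟨.r (1 : ℤ), by rw [dihedralHom_r, zpow_one]⟩
    · exact ⟨.sr (0 : ℤ), by rw [dihedralHom_sr, zpow_zero, mul_one]⟩

end

theorem nonempty_closure_mulEquiv_dihedralGroup {x y : G} (hy : y * y = 1) (hxy : x * y * x = y)
    (hyx : y ∉ Subgroup.zpowers x) :
    Nonempty (Subgroup.closure {x, y} ≃* DihedralGroup (orderOf x)) := by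
  have hinj : Function.Injective (dihedralHom (pow_orderOf_eq_one x) hy hxy) := by
    rw [injective_iff_map_eq_one]
    rintro (i | i) hi <;> obtain ⟨i, rfl⟩ := ZMod.intCast_surjective i
    · rw [dihedralHom_r, ← orderOf_dvd_iff_zpow_eq_one] at hi
      rw [(ZMod.intCast_zmod_eq_zero_iff_dvd _ _).2 hi, DihedralGroup.r_zero]
    · rw [dihedralHom_sr] at hi
      exact absurd ⟨-i, by simpa using (eq_inv_of_mul_eq_one_left hi).symm⟩ hyx
  exact ⟨((MonoidHom.ofInjective hinj).trans
    (MulEquiv.subgroupCongr (range_dihedralHom _ _ _))).symm⟩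

lemma notMem_zpowers_of_two_lt_orderOf {x y : G} (hxy : x * y * x = y) (hx : 2 < orderOf x) :
    y ∉ Subgroup.zpowers x := by
  rintro ⟨k, rfl⟩
  have hsq : x ^ 2 = 1 := by
    rw [← _root_.zpow_one_add, ← _root_.zpow_add_one, add_right_comm, _root_.zpow_add] at hxy
    simpa using hxy
  exact absurd (orderOf_le_of_pow_eq_one two_pos hsq) hx.not_ge

end DihedralGroups

section DiscreteAdditiveSubgroups

lemma eq_bot_of_smul_mem_of_norm_lt_one {𝕜 E : Type*} [NormedDivisionRing 𝕜]
    [SeminormedAddCommGroup E] [Module 𝕜 E] [NormSMulClass 𝕜 E] {L : AddSubgroup E}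
    [DiscreteTopology L] {x : 𝕜} (hx₀ : x ≠ 0) (hx₁ : ‖x‖ < 1) (hL : ∀ τ ∈ L, x • τ ∈ L) :
    L = ⊥ := by
  refine (AddSubgroup.eq_bot_iff_forall L).2 fun τ hτ ↦ ?_
  have hmem (k : ℕ) : x ^ k • τ ∈ L := by
    induction k with
    | zero => simpa using hτ
    | succ k ih => simpa only [pow_succ', mul_smul] using hL _ ih
  have hlim : Tendsto (fun k : ℕ ↦ x ^ k • τ) atTop (𝓝 0) := by
    rw [tendsto_zero_iff_norm_tendsto_zero]
    simpa [norm_smul] using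
      (tendsto_pow_atTop_nhds_zero_of_lt_one (norm_nonneg x) hx₁).mul_const ‖τ‖
  have hlimL : Tendsto (fun k ↦ (⟨x ^ k • τ, hmem k⟩ : L)) atTop (𝓝 0) :=
    tendsto_subtype_rng.2 hlim
  obtain ⟨k, hk⟩ := (tendsto_pure.1 (nhds_discrete L ▸ hlimL)).exists
  exact (smul_eq_zero.1 (congrArg Subtype.val hk)).resolve_left (pow_ne_zero k hx₀)

lemma norm_exp_two_pi_mul_I_div_sub_one_lt_one {n : ℕ} (hn : 7 ≤ n) :
    ‖Complex.exp (2 * π * Complex.I / n) - 1‖ < 1 := by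
  have hn' : (7 : ℝ) ≤ n := mod_cast hn
  calc ‖Complex.exp (2 * π * Complex.I / n) - 1‖
      = ‖Complex.exp (Complex.I * (2 * π / n : ℝ)) - 1‖ := by congr 3; push_cast; ring
    _ ≤ ‖2 * π / n‖ := norm_exp_I_mul_ofReal_sub_one_le
    _ = 2 * π / n := Real.norm_of_nonneg (by positivity)
    _ < 1 := by rw [div_lt_one (by positivity)]; linarith [Real.pi_lt_d2]

lemma lt_seven_of_isPrimitiveRoot_mul_mem {L : AddSubgroup ℂ} [DiscreteTopology L] (hL : L ≠ ⊥)
    {n : ℕ} {ζ : ℂ} (hζ : IsPrimitiveRoot ζ n) (hmul : ∀ τ ∈ L, ζ * τ ∈ L) : n < 7 := by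
  by_contra! hn
  have : NeZero n := ⟨by omega⟩
  have hexp := Complex.isPrimitiveRoot_exp n (NeZero.ne n)
  obtain ⟨k, -, hk⟩ := hζ.eq_pow_of_pow_eq_one hexp.pow_eq_one
  have hpow (j : ℕ) : ∀ τ ∈ L, ζ ^ j * τ ∈ L := by
    induction j with
    | zero => simp
    | succ j ih => intro τ hτ; simpa only [pow_succ', mul_assoc] using hmul _ (ih τ hτ)
  refine hL (eq_bot_of_smul_mem_of_norm_lt_one (x := ζ ^ k - 1) ?_ ?_ fun τ hτ ↦ ?_)
  · exact sub_ne_zero.2 (hk ▸ hexp.ne_one (by omega))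
  · exact hk ▸ norm_exp_two_pi_mul_I_div_sub_one_lt_one hn
  · rw [smul_eq_mul, sub_one_mul]
    exact L.sub_mem (hpow k τ hτ) hτ

theorem crystallographic_restriction {L : AddSubgroup ℂ} [DiscreteTopology L] (hL : L ≠ ⊥)
    {n : ℕ} {ζ : ℂ} (hζ : IsPrimitiveRoot ζ n) (hmul : ∀ τ ∈ L, ζ * τ ∈ L) : n < 7 ∧ n ≠ 5 := by
  refine ⟨lt_seven_of_isPrimitiveRoot_mul_mem hL hζ hmul, ?_⟩
  rintro rfl
  have hneg : IsPrimitiveRoot (-ζ) 10 := by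
    have hζ' := hζ.eq_orderOf
    have h2 : orderOf (-1 : ℂ) = 2 := by simp
    have hcop : (orderOf (-1 : ℂ)).Coprime (orderOf ζ) := by rw [h2, ← hζ']; decide
    rw [IsPrimitiveRoot.iff_orderOf, ← neg_one_mul,
      (Commute.all _ _).orderOf_mul_eq_mul_orderOf_of_coprime hcop, h2, ← hζ']
  have := lt_seven_of_isPrimitiveRoot_mul_mem hL hneg fun τ hτ ↦ by
    simpa only [neg_mul] using L.neg_mem (hmul τ hτ)
  omega

end DiscreteAdditiveSubgroups

section RootsOfUnity

lemma norm_one_sub_sq_of_sq_add_one_eq {ζ : ℂ} (hζ : ‖ζ‖ = 1) {y : ℝ} (hy : ζ ^ 2 + 1 = y * ζ) :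
    ‖1 - ζ‖ ^ 2 = 2 - y := by
  have hζ₀ : ζ ≠ 0 := norm_ne_zero_iff.1 (hζ ▸ one_ne_zero)
  have hconj : starRingEnd ℂ ζ * ζ = 1 := by simp [Complex.conj_mul', hζ]
  refine Complex.ofReal_injective (mul_right_cancel₀ hζ₀ ?_)
  push_cast
  rw [← Complex.conj_mul', map_sub, map_one]
  linear_combination (ζ - 1) * hconj - hy

lemma norm_one_sub_sq_of_isPrimitiveRoot_three {ζ : ℂ} (hζ : IsPrimitiveRoot ζ 3) :
    ‖1 - ζ‖ ^ 2 = 3 := by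
  have hroot : ζ ^ 2 + ζ + 1 = 0 := by
    simpa [Polynomial.cyclotomic_three] using hζ.isRoot_cyclotomic (by norm_num)
  rw [norm_one_sub_sq_of_sq_add_one_eq (hζ.norm'_eq_one three_ne_zero) (y := -1)
    (by push_cast; linear_combination hroot)]
  norm_num

lemma norm_one_sub_sq_of_isPrimitiveRoot_four {ζ : ℂ} (hζ : IsPrimitiveRoot ζ 4) :
    ‖1 - ζ‖ ^ 2 = 2 := by
  have hsq : ζ ^ 2 = -1 := (hζ.pow four_pos rfl).eq_neg_one_of_two_right
  rw [norm_one_sub_sq_of_sq_add_one_eq (hζ.norm'_eq_one four_ne_zero) (y := 0) (by simp [hsq])]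
  norm_num

lemma norm_one_sub_sq_of_isPrimitiveRoot_six {ζ : ℂ} (hζ : IsPrimitiveRoot ζ 6) :
    ‖1 - ζ‖ ^ 2 = 1 := by
  have hroot : ζ ^ 2 - ζ + 1 = 0 := by
    simpa [Polynomial.cyclotomic_six] using hζ.isRoot_cyclotomic (by norm_num)
  rw [norm_one_sub_sq_of_sq_add_one_eq (hζ.norm'_eq_one (by norm_num)) (y := 1)
    (by push_cast; linear_combination hroot)]
  norm_num

end RootsOfUnity

section ShimizuLeutbecher

/-- The matrix `[[1, τ], [0, 1]]`, which acts on the projective line as `w ↦ w + τ`. -/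
def translation {R : Type*} [CommRing R] (τ : R) : SL(2, R) :=
  Matrix.SpecialLinearGroup.transvection zero_ne_one τ

section CommRing

variable {R : Type*} [CommRing R]

lemma coe_translation (τ : R) : (translation τ : Matrix (Fin 2) (Fin 2) R) = !![1, τ; 0, 1] := by
  ext i j
  fin_cases i <;> fin_cases j <;> simp [translation, Matrix.SpecialLinearGroup.transvection_coe]

lemma translation_zero : translation (0 : R) = 1 :=
  Matrix.SpecialLinearGroup.transvection_coeff_zero _

lemma translation_add (σ τ : R) : translation (σ + τ) = translation σ * translation τ :=
  Matrix.SpecialLinearGroup.transvection_add _ _ _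

lemma translation_neg (τ : R) : translation (-τ) = (translation τ)⁻¹ :=
  (Matrix.SpecialLinearGroup.transvection_inv _ _).symm

lemma coe_conj_translation (g : SL(2, R)) (τ : R) :
    (g * translation τ * g⁻¹).1 = !![1 - g.1 0 0 * (g.1 1 0 * τ), g.1 0 0 ^ 2 * τ;
      -(g.1 1 0 ^ 2 * τ), 1 + g.1 0 0 * (g.1 1 0 * τ)] := by
  have hdet : g.1 0 0 * g.1 1 1 - g.1 0 1 * g.1 1 0 = 1 := by
    rw [← det_fin_two]; exact g.det_coe
  rw [coe_mul, coe_mul, coe_inv, adjugate_fin_two, coe_translation, eta_fin_two g.1, mul_fin_two,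
    mul_fin_two]
  ext i j
  fin_cases i <;> fin_cases j <;>
    simp only [of_apply, cons_val', cons_val_zero, cons_val_one, cons_val_fin_one, Fin.zero_eta,
      Fin.mk_one]
  · linear_combination hdet
  · ring
  · ring
  · linear_combination hdet

end CommRing

variable {𝕜 : Type*} [NormedField 𝕜]

/-- The iterates `g, g T g⁻¹, (g T g⁻¹) T (g T g⁻¹)⁻¹, …` where `T = translation τ`. -/
def shimizuIterate (g : SL(2, 𝕜)) (τ : 𝕜) (k : ℕ) : SL(2, 𝕜) :=
  (fun h ↦ h * translation τ * h⁻¹)^[k] g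

lemma shimizuIterate_succ (g : SL(2, 𝕜)) (τ : 𝕜) (k : ℕ) :
    shimizuIterate g τ (k + 1) =
      shimizuIterate g τ k * translation τ * (shimizuIterate g τ k)⁻¹ :=
  Function.iterate_succ_apply' _ _ _

lemma coe_shimizuIterate_succ (g : SL(2, 𝕜)) (τ : 𝕜) (k : ℕ) :
    (shimizuIterate g τ (k + 1)).1 =
      !![1 - (shimizuIterate g τ k).1 0 0 * ((shimizuIterate g τ k).1 1 0 * τ),
        (shimizuIterate g τ k).1 0 0 ^ 2 * τ;
        -((shimizuIterate g τ k).1 1 0 ^ 2 * τ),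
        1 + (shimizuIterate g τ k).1 0 0 * ((shimizuIterate g τ k).1 1 0 * τ)] := by
  rw [shimizuIterate_succ, coe_conj_translation]

lemma shimizuIterate_mem {Γ : Subgroup SL(2, 𝕜)} {g : SL(2, 𝕜)} {τ : 𝕜} (hg : g ∈ Γ)
    (hτ : translation τ ∈ Γ) (k : ℕ) : shimizuIterate g τ k ∈ Γ := by
  induction k with
  | zero => exact hg
  | succ k ih =>
    rw [shimizuIterate_succ]
    exact Γ.mul_mem (Γ.mul_mem ih hτ) (Γ.inv_mem ih)

lemma shimizuIterate_lowerLeft_ne_zero {g : SL(2, 𝕜)} {τ : 𝕜} (hτ : τ ≠ 0) (hg : g.1 1 0 ≠ 0)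
    (k : ℕ) : (shimizuIterate g τ k).1 1 0 ≠ 0 := by
  induction k with
  | zero => exact hg
  | succ k ih => simp [coe_shimizuIterate_succ, ih, hτ]

lemma shimizuIterate_lowerLeft_mul (g : SL(2, 𝕜)) (τ : 𝕜) (k : ℕ) :
    (shimizuIterate g τ k).1 1 0 * τ = -(-(g.1 1 0 * τ)) ^ 2 ^ k := by
  induction k with
  | zero => simp [shimizuIterate]
  | succ k ih =>
    rw [pow_succ, pow_mul, ← neg_sq ((-(g.1 1 0 * τ)) ^ 2 ^ k), ← ih, coe_shimizuIterate_succ]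
    simp only [of_apply, cons_val', cons_val_zero, cons_val_one, cons_val_fin_one]
    ring

lemma norm_shimizuIterate_lowerLeft_mul_le {g : SL(2, 𝕜)} {τ : 𝕜} (h : ‖g.1 1 0 * τ‖ ≤ 1) (k : ℕ) :
    ‖(shimizuIterate g τ k).1 1 0 * τ‖ ≤ ‖g.1 1 0 * τ‖ ^ (k + 1) := by
  rw [shimizuIterate_lowerLeft_mul, norm_neg, norm_pow, norm_neg]
  exact pow_le_pow_of_le_one (norm_nonneg _) h k.lt_two_pow_self

lemma norm_shimizuIterate_upperLeft_le {g : SL(2, 𝕜)} {τ : 𝕜} (h : ‖g.1 1 0 * τ‖ < 1) (k : ℕ) :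
    ‖(shimizuIterate g τ k).1 0 0‖ ≤ ‖g.1 0 0‖ + (1 - ‖g.1 1 0 * τ‖)⁻¹ := by
  have hpos : 0 < 1 - ‖g.1 1 0 * τ‖ := sub_pos.2 h
  induction k with
  | zero => exact le_add_of_nonneg_right (inv_nonneg.2 hpos.le)
  | succ k ih =>
    have hk : ‖(shimizuIterate g τ k).1 1 0 * τ‖ ≤ ‖g.1 1 0 * τ‖ :=
      (norm_shimizuIterate_lowerLeft_mul_le h.le k).trans
        (pow_le_of_le_one (norm_nonneg _) h.le k.succ_ne_zero)
    calc ‖(shimizuIterate g τ (k + 1)).1 0 0‖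
        = ‖1 - (shimizuIterate g τ k).1 0 0 * ((shimizuIterate g τ k).1 1 0 * τ)‖ := by
          simp [coe_shimizuIterate_succ]
      _ ≤ 1 + ‖(shimizuIterate g τ k).1 0 0‖ * ‖(shimizuIterate g τ k).1 1 0 * τ‖ := by
          rw [← norm_mul, ← norm_one (α := 𝕜)]
          exact norm_sub_le _ _
      _ ≤ 1 + (‖g.1 0 0‖ + (1 - ‖g.1 1 0 * τ‖)⁻¹) * ‖g.1 1 0 * τ‖ := by gcongr
      _ ≤ ‖g.1 0 0‖ + (1 - ‖g.1 1 0 * τ‖)⁻¹ := by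
          have := mul_inv_cancel₀ hpos.ne'
          nlinarith [mul_nonneg (norm_nonneg (g.1 0 0)) hpos.le]

lemma tendsto_shimizuIterate {g : SL(2, 𝕜)} {τ : 𝕜} (h : ‖g.1 1 0 * τ‖ < 1) (hτ : τ ≠ 0) :
    Tendsto (fun k ↦ shimizuIterate g τ (k + 1)) atTop (𝓝 (translation τ)) := by
  have hpow : Tendsto (fun k ↦ ‖g.1 1 0 * τ‖ ^ (k + 1)) atTop (𝓝 0) :=
    (tendsto_pow_atTop_nhds_zero_of_lt_one (norm_nonneg _) h).comp (tendsto_add_atTop_nat 1)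
  have hc : Tendsto (fun k ↦ (shimizuIterate g τ k).1 1 0 * τ) atTop (𝓝 0) :=
    squeeze_zero_norm (norm_shimizuIterate_lowerLeft_mul_le h.le) hpow
  have hac : Tendsto (fun k ↦ (shimizuIterate g τ k).1 0 0 * ((shimizuIterate g τ k).1 1 0 * τ))
      atTop (𝓝 0) :=
    isBoundedUnder_le_mul_tendsto_zero
      (isBoundedUnder_of ⟨_, norm_shimizuIterate_upperLeft_le h⟩) hc
  have ha : Tendsto (fun k ↦ (shimizuIterate g τ k).1 0 0) atTop (𝓝 1) := by
    rw [← tendsto_add_atTop_iff_nat 1]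
    simpa [coe_shimizuIterate_succ] using hac.const_sub 1
  have hcc : Tendsto (fun k ↦ -((shimizuIterate g τ k).1 1 0 ^ 2 * τ)) atTop (𝓝 0) := by
    have := ((hc.pow 2).mul_const τ⁻¹).neg
    simp only [ne_eq, OfNat.ofNat_ne_zero, not_false_eq_true, zero_pow, zero_mul, neg_zero] at this
    refine this.congr fun k ↦ ?_
    field_simp
  refine tendsto_subtype_rng.2 (tendsto_pi_nhds.2 fun i ↦ tendsto_pi_nhds.2 fun j ↦ ?_)
  simp only [coe_shimizuIterate_succ, coe_translation]
  fin_cases i <;> fin_cases j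
  · simpa using hac.const_sub 1
  · simpa using (ha.pow 2).mul_const τ
  · simpa using hcc
  · simpa using hac.const_add 1

theorem one_le_norm_lowerLeft_mul_of_translation_mem {Γ : Subgroup SL(2, 𝕜)}
    [DiscreteTopology Γ] {τ : 𝕜} (hτΓ : translation τ ∈ Γ) (hτ : τ ≠ 0) {g : SL(2, 𝕜)}
    (hg : g ∈ Γ) (hc : g.1 1 0 ≠ 0) : 1 ≤ ‖g.1 1 0 * τ‖ := by
  by_contra! h
  have hlim : Tendsto (fun k ↦ (⟨_, shimizuIterate_mem hg hτΓ (k + 1)⟩ : Γ)) atTop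
      (𝓝 ⟨translation τ, hτΓ⟩) := tendsto_subtype_rng.2 (tendsto_shimizuIterate h hτ)
  obtain ⟨k, hk⟩ := (tendsto_pure.1 (nhds_discrete Γ ▸ hlim)).exists
  apply shimizuIterate_lowerLeft_ne_zero hτ hc (k + 1)
  have hk' : shimizuIterate g τ (k + 1) = translation τ := congrArg Subtype.val hk
  simp [hk', coe_translation]

end ShimizuLeutbecher

section DiscreteSubgroups

/-- The additive group of all `τ` for which the translation by `τ` belongs to `Γ`. -/
def translationSubgroup {R : Type*} [CommRing R] (Γ : Subgroup SL(2, R)) : AddSubgroup R where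
  carrier := {τ | translation τ ∈ Γ}
  add_mem' hσ hτ := by
    rw [Set.mem_ofPred_eq, translation_add]
    exact Γ.mul_mem hσ hτ
  zero_mem' := by
    rw [Set.mem_ofPred_eq, translation_zero]
    exact Γ.one_mem
  neg_mem' hτ := by
    rw [Set.mem_ofPred_eq, translation_neg]
    exact Γ.inv_mem hτ

lemma translation_injective {R : Type*} [CommRing R] :
    Function.Injective (translation : R → SL(2, R)) := fun σ τ h ↦ by
  simpa [coe_translation] using congrArg (fun g : SL(2, R) ↦ g 0 1) h

lemma continuous_translation {R : Type*} [CommRing R] [TopologicalSpace R] :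
    Continuous (translation : R → SL(2, R)) := by
  refine continuous_induced_rng.2 (continuous_matrix fun i j ↦ ?_)
  change Continuous fun τ ↦ (translation τ).1 i j
  simp only [coe_translation]
  fin_cases i <;> fin_cases j <;>
    simp only [of_apply, cons_val', cons_val_zero, cons_val_one, cons_val_fin_one, Fin.zero_eta,
      Fin.mk_one] <;>
    fun_prop

lemma discreteTopology_translationSubgroup {R : Type*} [CommRing R] [TopologicalSpace R]
    (Γ : Subgroup SL(2, R)) [DiscreteTopology Γ] : DiscreteTopology (translationSubgroup Γ) :=
  DiscreteTopology.preimage_of_continuous_injective (Γ : Set SL(2, R)) continuous_translation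
    translation_injective

open Pointwise in
lemma conj_mem_smul {G : Type*} [Group G] {Γ : Subgroup G} {g x : G} (hx : x ∈ Γ) :
    g * x * g⁻¹ ∈ ConjAct.toConjAct g • Γ :=
  Subgroup.smul_mem_pointwise_smul x (ConjAct.toConjAct g) Γ hx

open Pointwise in
lemma IsDiscreteSubgroup.conj {Γ : Subgroup SL2C} (hΓ : IsDiscreteSubgroup Γ) (P : SL2C) :
    IsDiscreteSubgroup (ConjAct.toConjAct P • Γ) := by
  have : IsTopologicalGroup SL2C := Matrix.SpecialLinearGroup.topologicalGroup
  have : DiscreteTopology Γ := hΓ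
  exact inferInstanceAs (DiscreteTopology (ConjAct.toConjAct P • Γ : Subgroup SL2C))

end DiscreteSubgroups

section FrobeniusNorm

lemma fnorm_sq (M : Matrix (Fin 2) (Fin 2) ℂ) :
    fnorm M ^ 2 = ‖M 0 0‖ ^ 2 + ‖M 0 1‖ ^ 2 + ‖M 1 0‖ ^ 2 + ‖M 1 1‖ ^ 2 := by
  have h : fnorm M = (∑ i, ∑ j, ‖M i j‖ ^ (2 : ℝ)) ^ (1 / 2 : ℝ) := frobenius_norm_def M
  rw [h, ← Real.sqrt_eq_rpow, Real.sq_sqrt (by positivity)]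
  simp only [Fin.sum_univ_two, Real.rpow_two]
  ring

lemma fnorm_sq_eq_trace (M : Matrix (Fin 2) (Fin 2) ℂ) :
    ((fnorm M ^ 2 : ℝ) : ℂ) = trace (Mᴴ * M) := by
  simp only [fnorm_sq, trace_fin_two, Matrix.mul_apply, Fin.sum_univ_two, conjTranspose_apply,
    ← starRingEnd_apply, Complex.conj_mul']
  push_cast
  ring

lemma conjTranspose_mul_self_fin_two (M : Matrix (Fin 2) (Fin 2) ℂ) : Mᴴ * M =
    !![((‖M 0 0‖ ^ 2 + ‖M 1 0‖ ^ 2 : ℝ) : ℂ), star (M 0 0) * M 0 1 + star (M 1 0) * M 1 1;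
      star (star (M 0 0) * M 0 1 + star (M 1 0) * M 1 1),
      ((‖M 0 1‖ ^ 2 + ‖M 1 1‖ ^ 2 : ℝ) : ℂ)] := by
  ext i j
  fin_cases i <;> fin_cases j <;>
    simp [Matrix.mul_apply, Fin.sum_univ_two, ← Complex.conj_mul', mul_comm]

lemma det_conjTranspose_mul_self (W : SL(2, ℂ)) : (W.1ᴴ * W.1).det = 1 := by
  rw [det_mul, det_conjTranspose, W.det_coe, star_one, one_mul]

lemma norm_sq_add_norm_sq_firstCol_pos (W : SL(2, ℂ)) : 0 < ‖W.1 0 0‖ ^ 2 + ‖W.1 1 0‖ ^ 2 := by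
  have hdet := W.det_coe
  rw [det_fin_two] at hdet
  by_cases h : W.1 0 0 = 0
  · have h' : W.1 1 0 ≠ 0 := fun h' ↦ by simp [h, h'] at hdet
    positivity
  · positivity

lemma exists_eq_mul_translation (C : SL(2, ℂ)) : ∃ (W : SL(2, ℂ)) (z : ℂ) (s : ℝ), 0 < s ∧
    C = W * translation z ∧ W.1ᴴ * W.1 = !![(s : ℂ), 0; 0, (s : ℂ)⁻¹] := by
  -- Gram–Schmidt orthogonalization of the columns of `C`.
  set s : ℝ := ‖C.1 0 0‖ ^ 2 + ‖C.1 1 0‖ ^ 2 with hs_def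
  set h : ℂ := star (C.1 0 0) * C.1 0 1 + star (C.1 1 0) * C.1 1 1 with hh_def
  have hs : 0 < s := norm_sq_add_norm_sq_firstCol_pos C
  have hs' : (s : ℂ) ≠ 0 := Complex.ofReal_ne_zero.2 hs.ne'
  set W := C * translation (-(h / s)) with hW_def
  have hW : W.1 = !![C.1 0 0, C.1 0 1 - C.1 0 0 * (h / s);
      C.1 1 0, C.1 1 1 - C.1 1 0 * (h / s)] := by
    rw [hW_def, coe_mul, coe_translation, eta_fin_two C.1, mul_fin_two]
    ext i j
    fin_cases i <;> fin_cases j <;> simp <;> ring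
  have hscol : star (C.1 0 0) * C.1 0 0 + star (C.1 1 0) * C.1 1 0 = s := by
    simp [hs_def, ← starRingEnd_apply, Complex.conj_mul']
  have horth : star (W.1 0 0) * W.1 0 1 + star (W.1 1 0) * W.1 1 1 = 0 := by
    simp only [hW, of_apply, cons_val', cons_val_zero, cons_val_one, cons_val_fin_one]
    have := mul_div_cancel₀ h hs'
    linear_combination -(h / s) * hscol - hh_def - this
  have hdet := det_conjTranspose_mul_self W
  rw [conjTranspose_mul_self_fin_two, horth, star_zero, det_fin_two_of, mul_zero, sub_zero] at hdet
  refine ⟨W, h / s, s, hs, by rw [hW_def, translation_neg, inv_mul_cancel_right], ?_⟩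
  rw [conjTranspose_mul_self_fin_two, horth, star_zero, eq_inv_of_mul_eq_one_right hdet]
  simp [hW, hs_def]

lemma coe_inv_mul_conjTranspose (W : SL(2, ℂ)) : (W⁻¹).1 * (W⁻¹).1ᴴ = (W.1ᴴ * W.1)⁻¹ := by
  have hW : W.1 * (W⁻¹).1 = 1 := by rw [← coe_mul, mul_inv_cancel, coe_one]
  refine (inv_eq_right_inv ?_).symm
  rw [Matrix.mul_assoc, ← Matrix.mul_assoc W.1, hW, Matrix.one_mul, ← conjTranspose_mul,
    ← coe_mul, inv_mul_cancel, coe_one, conjTranspose_one]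

lemma fnorm_sq_conj {W : SL(2, ℂ)} {s : ℝ} (hs : s ≠ 0)
    (hW : W.1ᴴ * W.1 = !![(s : ℂ), 0; 0, (s : ℂ)⁻¹]) (M : SL(2, ℂ)) :
    fnorm (W * M * W⁻¹).1 ^ 2 =
      ‖M.1 0 0‖ ^ 2 + s ^ 2 * ‖M.1 0 1‖ ^ 2 + s⁻¹ ^ 2 * ‖M.1 1 0‖ ^ 2 + ‖M.1 1 1‖ ^ 2 := by
  have hs' : (s : ℂ) ≠ 0 := Complex.ofReal_ne_zero.2 hs
  have hinv : !![(s : ℂ), 0; 0, (s : ℂ)⁻¹]⁻¹ = !![(s : ℂ)⁻¹, 0; 0, (s : ℂ)] :=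
    inv_eq_right_inv (by simp [hs', one_fin_two])
  apply Complex.ofReal_injective
  calc ((fnorm (W * M * W⁻¹).1 ^ 2 : ℝ) : ℂ)
      = trace (((W⁻¹).1ᴴ * (M.1ᴴ * (W.1ᴴ * W.1) * M.1)) * (W⁻¹).1) := by
        rw [fnorm_sq_eq_trace]
        simp only [coe_mul, conjTranspose_mul, Matrix.mul_assoc]
    _ = trace ((W.1ᴴ * W.1)⁻¹ * (M.1ᴴ * (W.1ᴴ * W.1) * M.1)) := by
        rw [trace_mul_comm, ← Matrix.mul_assoc, coe_inv_mul_conjTranspose]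
    _ = _ := by
        rw [hW, hinv]
        simp only [trace_fin_two, Matrix.mul_apply, Fin.sum_univ_two, conjTranspose_apply,
          ← starRingEnd_apply]
        simp [← Complex.conj_mul']
        field_simp
        ring

/-- The squared Frobenius norm of the conjugate of `M` by an element of `SL(2, ℂ)` sending the
point `-z + s⁻¹ j` of upper half-space to `j`. -/
def conjNormSq (z : ℂ) (s : ℝ) (M : Matrix (Fin 2) (Fin 2) ℂ) : ℝ :=
  ‖M 0 0 + z * M 1 0‖ ^ 2 + s ^ 2 * ‖M 0 1 + z * (M 1 1 - M 0 0) - z ^ 2 * M 1 0‖ ^ 2 +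
    s⁻¹ ^ 2 * ‖M 1 0‖ ^ 2 + ‖M 1 1 - z * M 1 0‖ ^ 2

lemma exists_fnorm_sq_conj_eq_conjNormSq (C : SL(2, ℂ)) : ∃ (z : ℂ) (s : ℝ), 0 < s ∧
    ∀ M : SL(2, ℂ), fnorm (C * M * C⁻¹).1 ^ 2 = conjNormSq z s M := by
  obtain ⟨W, z, s, hs, rfl, hW⟩ := exists_eq_mul_translation C
  refine ⟨z, s, hs, fun M ↦ ?_⟩
  have hconj : (translation z * M * translation (-z)).1 =
      !![M.1 0 0 + z * M.1 1 0, M.1 0 1 + z * (M.1 1 1 - M.1 0 0) - z ^ 2 * M.1 1 0;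
        M.1 1 0, M.1 1 1 - z * M.1 1 0] := by
    rw [coe_mul, coe_mul, coe_translation, coe_translation, eta_fin_two M.1, mul_fin_two,
      mul_fin_two]
    ext i j
    fin_cases i <;> fin_cases j <;> simp <;> ring
  have hassoc : W * translation z * M * (W * translation z)⁻¹ =
      W * (translation z * M * translation (-z)) * W⁻¹ := by
    rw [translation_neg]; group
  rw [hassoc, fnorm_sq_conj hs.ne' hW, hconj]
  simp [conjNormSq]

end FrobeniusNorm

section DisplacementEstimate

lemma conjNormSq_diagonal {a : ℂ} (ha : ‖a‖ = 1) (z : ℂ) (s : ℝ) :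
    conjNormSq z s !![a, 0; 0, a⁻¹] = 2 + (s * ‖z‖) ^ 2 * ‖1 - a ^ 2‖ ^ 2 := by
  have ha₀ : a ≠ 0 := norm_ne_zero_iff.1 (ha ▸ one_ne_zero)
  have hnorm : ‖a⁻¹ - a‖ = ‖1 - a ^ 2‖ := by
    rw [← mul_one ‖a⁻¹ - a‖, ← ha, ← norm_mul, sub_mul, inv_mul_cancel₀ ha₀, sq]
  simp only [conjNormSq, of_apply, cons_val', cons_val_zero, cons_val_one, cons_val_fin_one,
    mul_zero, add_zero, sub_zero, zero_add, norm_mul, norm_inv, norm_zero, ha, hnorm]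
  ring

lemma norm_sq_add_le_conjNormSq (p z : ℂ) (s : ℝ) :
    ‖p - z‖ ^ 2 + ‖z‖ ^ 2 + s⁻¹ ^ 2 + (s - s * ‖z‖ * ‖p - z‖) ^ 2 ≤
      conjNormSq z s !![p, 1; -1, 0] := by
  have habs : |1 - ‖z‖ * ‖p - z‖| ≤ ‖1 - z * (p - z)‖ := by
    simpa using abs_norm_sub_norm_le 1 (z * (p - z))
  have hdiff : (s - s * ‖z‖ * ‖p - z‖) ^ 2 ≤ s ^ 2 * ‖1 - z * (p - z)‖ ^ 2 :=
    calc (s - s * ‖z‖ * ‖p - z‖) ^ 2 = s ^ 2 * |1 - ‖z‖ * ‖p - z‖| ^ 2 := by rw [sq_abs]; ring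
      _ ≤ s ^ 2 * ‖1 - z * (p - z)‖ ^ 2 := by gcongr
  have heq : conjNormSq z s !![p, 1; -1, 0] =
      ‖p - z‖ ^ 2 + s ^ 2 * ‖1 - z * (p - z)‖ ^ 2 + s⁻¹ ^ 2 + ‖z‖ ^ 2 := by
    simp only [conjNormSq, of_apply, cons_val', cons_val_zero, cons_val_one, cons_val_fin_one,
      mul_neg, mul_one, norm_neg, norm_one, one_pow, zero_sub, sub_neg_eq_add,
      ← sub_eq_add_neg, zero_add]
    ring_nf
  linarith

/- `κ` is the Lagrange multiplier of the constraint `s * s⁻¹ = 1` and `l` that of a lower bound on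
`‖p‖ ≤ ‖p - z‖ + ‖z‖`; for fixed `s * ‖z‖`, the hypothesis `h` says that the resulting quadratic
form in `‖p - z‖`, `s` and `s⁻¹` is positive semidefinite. -/
lemma two_mul_add_mul_le_conjNormSq {p z : ℂ} {s κ l : ℝ} (hs : s ≠ 0) (hl₀ : 0 ≤ l) (hl₁ : l < 1)
    (h : (s * ‖z‖) ^ 2 * (κ + l) ^ 2 ≤ (1 - l) * (1 + (s * ‖z‖) ^ 2 * (1 - l) - κ ^ 2)) :
    2 * κ + l * ‖p‖ ^ 2 ≤ conjNormSq z s !![p, 1; -1, 0] := by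
  have hB := norm_sq_add_le_conjNormSq p z s
  have hp : ‖p‖ ≤ ‖p - z‖ + ‖z‖ := by simpa using norm_add_le (p - z) z
  set ρ := s * ‖z‖ with hρ
  set r := ‖p - z‖
  set t := s⁻¹
  have hst : s * t = 1 := mul_inv_cancel₀ hs
  have hz : ‖z‖ = ρ * t := by rw [hρ, mul_right_comm, hst, one_mul]
  rw [hz] at hp hB
  have hform : 0 ≤ (1 - l) * r ^ 2 - 2 * (ρ * (κ + l)) * (r * t) +
      (1 + ρ ^ 2 * (1 - l) - κ ^ 2) * t ^ 2 := by
    refine nonneg_of_mul_nonneg_right (a := 1 - l) ?_ (sub_pos.2 hl₁)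
    linear_combination
      sq_nonneg ((1 - l) * r - ρ * (κ + l) * t) + mul_le_mul_of_nonneg_right h (sq_nonneg t)
  calc 2 * κ + l * ‖p‖ ^ 2 ≤ 2 * κ * (s * t) + l * (r + ρ * t) ^ 2 := by
        rw [hst, mul_one]; gcongr
    _ ≤ r ^ 2 + (ρ * t) ^ 2 + t ^ 2 + (s - ρ * r) ^ 2 := by
        linear_combination hform + sq_nonneg (s - ρ * r - κ * t)
    _ ≤ _ := hB

lemma le_max_conjNormSq {a p z : ℂ} {s κ l T : ℝ} (ha : ‖a‖ = 1) (ha₂ : a ^ 2 ≠ 1) (hs : s ≠ 0)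
    (hl₀ : 0 ≤ l) (hl₁ : l < 1) (hκ : -1 ≤ κ) (hκl : 1 ≤ κ + 2 * l)
    (hTp : T ≤ 2 * κ + l * ‖p‖ ^ 2)
    (hT : (T - 2) * (κ + 2 * l - 1) ≤ ‖1 - a ^ 2‖ ^ 2 * ((1 - l) * (1 - κ))) :
    T ≤ max (conjNormSq z s !![a, 0; 0, a⁻¹]) (conjNormSq z s !![p, 1; -1, 0]) := by
  rw [le_max_iff, or_iff_not_imp_left, conjNormSq_diagonal ha, not_le]
  intro hA
  have hd : 0 < ‖1 - a ^ 2‖ ^ 2 := by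
    have := norm_pos_iff.2 (sub_ne_zero.2 ha₂.symm)
    positivity
  have hρ : (s * ‖z‖) ^ 2 * (κ + 2 * l - 1) ≤ (1 - l) * (1 - κ) := by
    refine le_of_mul_le_mul_left (hT.trans' ?_) hd
    nlinarith
  calc T ≤ 2 * κ + l * ‖p‖ ^ 2 := hTp
    _ ≤ _ := two_mul_add_mul_le_conjNormSq hs hl₀ hl₁ (by nlinarith)

lemma tOf_three_le : tOf 3 ≤ 1.018 := by
  have hsq : √5 ^ 2 = 5 := Real.sq_sqrt (by norm_num)
  have hlb : 2.236 < √5 := Real.lt_sqrt_of_sq_lt (by norm_num)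
  have hub : √5 < 2.2361 := (Real.sqrt_lt' (by norm_num)).2 (by norm_num)
  have : √(8 + 2 * √5) ≤ (7.108 - 0.018 * √5) / 2 :=
    Real.sqrt_le_iff.2 ⟨by linarith, by nlinarith⟩
  rw [tOf, div_le_iff₀ (by linarith)]
  linarith

lemma tOf_four_le : tOf 4 ≤ 1.0605 := by
  have hsq : √3 ^ 2 = 3 := Real.sq_sqrt (by norm_num)
  have hlb : 1.732 < √3 := Real.lt_sqrt_of_sq_lt (by norm_num)
  have hub : √3 < 1.7321 := (Real.sqrt_lt' (by norm_num)).2 (by norm_num)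
  rw [tOf, div_le_iff₀ (by linarith), sub_le_iff_le_add]
  exact Real.sqrt_le_iff.2 ⟨by linarith, by nlinarith⟩

lemma two_mul_tOf_le_max_conjNormSq {a p z : ℂ} {s : ℝ} {n : ℕ} (hs : s ≠ 0)
    (hn : n = 3 ∨ n = 4 ∨ n = 6) (ha : IsPrimitiveRoot (a ^ 2) n)
    (hp : 1 ≤ ‖1 - a ^ 2‖ * ‖p‖ ^ 2) :
    2 * tOf n ≤ max (conjNormSq z s !![a, 0; 0, a⁻¹]) (conjNormSq z s !![p, 1; -1, 0]) := by
  have hn₀ : n ≠ 0 := by omega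
  have ha₁ : ‖a‖ = 1 := (pow_eq_one_iff_of_nonneg (norm_nonneg a) two_ne_zero).1 <| by
    rw [← norm_pow, ha.norm'_eq_one hn₀]
  have ha₂ : a ^ 2 ≠ 1 := ha.ne_one (by omega)
  have hp₂ : 1 ≤ ‖1 - a ^ 2‖ ^ 2 * (‖p‖ ^ 2) ^ 2 := by
    rw [← mul_pow]; exact one_le_pow₀ hp
  have hp₀ : 0 ≤ ‖p‖ ^ 2 := sq_nonneg _
  -- For `n = 6` the choice of `κ` and `l` is exact; for `n = 3, 4` there is room to spare.
  rcases hn with rfl | rfl | rfl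
  · have hd := norm_one_sub_sq_of_isPrimitiveRoot_three ha
    have hq : 0.577 ≤ ‖p‖ ^ 2 := by rw [hd] at hp₂; nlinarith
    exact le_max_conjNormSq (κ := 7 / 8) (l := 1 / 2) ha₁ ha₂ hs (by norm_num) (by norm_num)
      (by norm_num) (by norm_num) (by linarith [tOf_three_le]) (by linarith [tOf_three_le])
  · have hd := norm_one_sub_sq_of_isPrimitiveRoot_four ha
    have hq : 0.707 ≤ ‖p‖ ^ 2 := by rw [hd] at hp₂; nlinarith
    exact le_max_conjNormSq (κ := 7 / 8) (l := 8 / 15) ha₁ ha₂ hs (by norm_num) (by norm_num)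
      (by norm_num) (by norm_num) (by linarith [tOf_four_le]) (by linarith [tOf_four_le])
  · have hd := norm_one_sub_sq_of_isPrimitiveRoot_six ha
    have hq : 1 ≤ ‖p‖ ^ 2 := by rw [hd] at hp₂; nlinarith
    exact le_max_conjNormSq (κ := 7 / 8) (l := 3 / 8) ha₁ ha₂ hs (by norm_num) (by norm_num)
      (by norm_num) (by norm_num) (by rw [tOf]; linarith) (by norm_num [tOf, hd])

end DisplacementEstimate

section TraceIdentities

variable {R : Type*} [CommRing R]

lemma trace_commutator (A B : SL(2, R)) : trace (A * B * A⁻¹ * B⁻¹).1 =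
    trace A.1 ^ 2 + trace B.1 ^ 2 + trace (A * B).1 ^ 2 -
      trace A.1 * trace B.1 * trace (A * B).1 - 2 := by
  have hA : A.1 0 0 * A.1 1 1 - A.1 0 1 * A.1 1 0 = 1 := by rw [← det_fin_two]; exact A.det_coe
  have hB : B.1 0 0 * B.1 1 1 - B.1 0 1 * B.1 1 0 = 1 := by rw [← det_fin_two]; exact B.det_coe
  simp only [coe_mul, coe_inv, adjugate_fin_two, trace_fin_two, Matrix.mul_apply,
    Fin.sum_univ_two, of_apply, cons_val', cons_val_zero, cons_val_one, cons_val_fin_one]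
  linear_combination ((A.1 0 0 + A.1 1 1) ^ 2 - 2 * (A.1 0 0 * A.1 1 1 - A.1 0 1 * A.1 1 0)) * hB +
    ((B.1 0 0 + B.1 1 1) ^ 2 - 2) * hA

lemma mul_self_eq_trace_smul_sub_det_smul_one (A : Matrix (Fin 2) (Fin 2) R) :
    A * A = trace A • A - A.det • 1 := by
  nontriviality R
  have h := aeval_self_charpoly A
  simp only [charpoly_fin_two, map_add, map_sub, map_mul, Polynomial.aeval_X,
    Polynomial.aeval_C, Algebra.algebraMap_eq_smul_one, smul_one_mul, sq] at h
  rw [← sub_eq_zero, ← h]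
  abel

lemma mul_self_eq_neg_one_of_trace_eq_zero {A : SL(2, R)} (hA : trace A.1 = 0) : A * A = -1 := by
  apply Subtype.ext
  rw [coe_mul, coe_neg, coe_one, mul_self_eq_trace_smul_sub_det_smul_one, hA, A.det_coe, zero_smul,
    one_smul, zero_sub]

end TraceIdentities

section Center

lemma mem_center_iff_mem_range_scalar {ι R : Type*} [Fintype ι] [DecidableEq ι] [CommRing R]
    {A : Matrix.SpecialLinearGroup ι R} :
    A ∈ Subgroup.center (Matrix.SpecialLinearGroup ι R) ↔ A.1 ∈ Set.range (scalar ι) := by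
  rw [Matrix.SpecialLinearGroup.mem_center_iff]
  refine exists_congr fun r ↦ and_iff_right_of_imp fun h ↦ ?_
  rw [← A.det_coe, ← h, scalar_apply, det_diagonal, Finset.prod_const, Finset.card_univ]

lemma mem_center_iff_eq_one_or_eq_neg_one {R : Type*} [CommRing R] [IsDomain R] {A : SL(2, R)} :
    A ∈ Subgroup.center SL(2, R) ↔ A = 1 ∨ A = -1 := by
  have hscalar (r : R) (B : SL(2, R)) (hB : B.1 = scalar (Fin 2) r) :
      scalar (Fin 2) r = A ↔ A = B := by
    rw [← hB, eq_comm]; exact Subtype.ext_iff.symm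
  have hneg : (-1 : SL(2, R)).1 = scalar (Fin 2) (-1) := by
    rw [map_neg, map_one, coe_neg, coe_one]
  simp only [Matrix.SpecialLinearGroup.mem_center_iff, Fintype.card_fin, sq_eq_one_iff,
    or_and_right, exists_or, exists_eq_left, hscalar 1 1 (by simp), hscalar (-1) (-1) hneg]

lemma IsEllipticOfOrder.orderOf_eq {A : SL2C} {n : ℕ} (hn : 0 < n) (hA : IsEllipticOfOrder A n) :
    orderOf (A : PSL2C) = n := by
  have hpow (k : ℕ) : (A : PSL2C) ^ k = 1 ↔ A ^ k = 1 ∨ A ^ k = -1 := by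
    rw [← QuotientGroup.mk_pow, QuotientGroup.eq_one_iff, mem_center_iff_eq_one_or_eq_neg_one]
  refine (orderOf_eq_iff hn).2 ⟨(hpow n).2 hA.1, fun k hkn hk ↦ ?_⟩
  rw [ne_eq, hpow, not_or]
  exact hA.2 k hk hkn

lemma orderOf_mk_conj {G : Type*} [Group G] (N : Subgroup G) [N.Normal] (g x : G) :
    orderOf ((g * x * g⁻¹ : G) : G ⧸ N) = orderOf (x : G ⧸ N) :=
  (MulAut.conj (g : G ⧸ N)).orderOf_eq x

variable {K : Type*} [Field K]

lemma diag2_pow {a : K} (ha : a ≠ 0) (k : ℕ) :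
    diag2 a ha ^ k = diag2 (a ^ k) (pow_ne_zero k ha) := by
  apply Subtype.ext
  rw [coe_pow, diag2_coe, diag2_coe, diagonal_pow]
  congr 1
  ext i
  fin_cases i <;> simp

lemma diag2_mem_center_iff {a : K} (ha : a ≠ 0) :
    diag2 a ha ∈ Subgroup.center SL(2, K) ↔ a ^ 2 = 1 := by
  rw [mem_center_iff_mem_range_scalar, diag2_coe', sq, mul_eq_one_iff_eq_inv₀ ha]
  constructor
  · rintro ⟨r, hr⟩
    have h₀ : r = a := by simpa using congrFun₂ hr 0 0
    have h₁ : r = a⁻¹ := by simpa using congrFun₂ hr 1 1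
    exact h₀.symm.trans h₁
  · refine fun h ↦ ⟨a, ?_⟩
    ext i j
    fin_cases i <;> fin_cases j <;> simp [← h]

lemma orderOf_mk_diag2 {a : K} (ha : a ≠ 0) :
    orderOf (diag2 a ha : SL(2, K) ⧸ Subgroup.center SL(2, K)) = orderOf (a ^ 2) := by
  refine orderOf_eq_orderOf_iff.2 fun k ↦ ?_
  rw [← QuotientGroup.mk_pow, QuotientGroup.eq_one_iff, diag2_pow, diag2_mem_center_iff,
    pow_right_comm]

lemma discr_ne_zero_of_pow_mem_center [CharZero K] {A : SL(2, K)} {n : ℕ} (hn : n ≠ 0)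
    (hA : A ∉ Subgroup.center SL(2, K)) (hAn : A ^ n ∈ Subgroup.center SL(2, K)) :
    A.1.discr ≠ 0 := by
  rw [mem_center_iff_mem_range_scalar] at hA hAn
  intro h
  have hpar : (A : GL (Fin 2) K).IsParabolic := ⟨hA, h⟩
  exact (hpar.pow hn).1 (by simpa using hAn)

lemma IsEllipticOfOrder.sq_ne_one {A : SL2C} {n : ℕ} (hn : 2 ≤ n) (hA : IsEllipticOfOrder A n)
    {a : ℂ} (ha₀ : a ≠ 0) (ha : trace A.1 = a + a⁻¹) : a ^ 2 ≠ 1 := by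
  have hcenter (k : ℕ) : A ^ k ∈ Subgroup.center SL2C ↔ n ∣ k := by
    rw [← hA.orderOf_eq (by omega), orderOf_dvd_iff_pow_eq_one, ← QuotientGroup.mk_pow,
      QuotientGroup.eq_one_iff]
  intro h
  refine discr_ne_zero_of_pow_mem_center (n := n) (by omega) ?_ ((hcenter n).2 dvd_rfl) ?_
  · rw [← pow_one A, hcenter, Nat.dvd_one]
    omega
  · rw [discr_fin_two, A.det_coe, ha]
    field_simp
    linear_combination (a ^ 2 - 1) * h

end Center

section CommutatorParameter

lemma γp_eq_βp_iff (A B : SL2C) : γp A B = βp A ↔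
    trace (A * B).1 ^ 2 + trace B.1 ^ 2 = trace A.1 * trace B.1 * trace (A * B).1 := by
  rw [γp, βp, trace_commutator]
  constructor <;> intro h <;> linear_combination h

lemma exists_pslImage_mulEquiv_dihedralGroup {A B : SL2C} (hA : 2 < orderOf (A : PSL2C))
    (hB : trace B.1 = 0) (hAB : trace (A * B).1 = 0) :
    ∃ m : ℕ, Nonempty (pslImage (Subgroup.closure {A, B}) ≃* DihedralGroup m) := by
  have hBB : B * B = -1 := mul_self_eq_neg_one_of_trace_eq_zero hB
  have hABA : A * B * A = B := by
    have h := mul_self_eq_neg_one_of_trace_eq_zero hAB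
    rw [← hBB, ← mul_assoc] at h
    exact mul_right_cancel h
  have hy : (B : PSL2C) * B = 1 := by
    rw [← QuotientGroup.mk_mul, QuotientGroup.eq_one_iff, mem_center_iff_eq_one_or_eq_neg_one]
    exact .inr hBB
  have hxy : (A * B * A : PSL2C) = B := congrArg (QuotientGroup.mk' _) hABA
  rw [pslImage, MonoidHom.map_closure, Set.image_pair]
  exact ⟨_, nonempty_closure_mulEquiv_dihedralGroup hy hxy
    (notMem_zpowers_of_two_lt_orderOf hxy hA)⟩

lemma trace_ne_zero_of_not_dihedral {A B : SL2C} (hA : 2 < orderOf (A : PSL2C))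
    (hnd : ¬ ∃ m : ℕ, Nonempty (pslImage (Subgroup.closure {A, B}) ≃* DihedralGroup m))
    (hγ : γp A B = βp A) : trace B.1 ≠ 0 := by
  refine fun hB ↦ hnd (exists_pslImage_mulEquiv_dihedralGroup hA hB ?_)
  simpa [hB] using (γp_eq_βp_iff A B).1 hγ

lemma exists_eq_add_inv {K : Type*} [Field K] [IsAlgClosed K] (x : K) : ∃ a ≠ 0, x = a + a⁻¹ := by
  obtain ⟨a, ha⟩ := IsAlgClosed.exists_root
    (.C 1 * .X ^ 2 + .C (-x) * .X + .C 1 : Polynomial K)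
    (by rw [Polynomial.degree_quadratic one_ne_zero]; decide)
  have hroot : a ^ 2 - x * a + 1 = 0 := by simpa [sub_eq_add_neg] using ha
  have ha₀ : a ≠ 0 := by
    rintro rfl
    simp at hroot
  refine ⟨a, ha₀, ?_⟩
  field_simp
  linear_combination -hroot

lemma exists_eigenvalue_trace_mul_eq {A B : SL2C} (hγ : γp A B = βp A) :
    ∃ a ≠ 0, trace A.1 = a + a⁻¹ ∧ trace (A * B).1 = a * trace B.1 := by
  obtain ⟨a, ha₀, ha⟩ := exists_eq_add_inv (trace A.1)
  have hfactor : (trace (A * B).1 - a * trace B.1) * (trace (A * B).1 - a⁻¹ * trace B.1) = 0 := by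
    have hinv := mul_inv_cancel₀ ha₀
    linear_combination (γp_eq_βp_iff A B).1 hγ + trace B.1 * trace (A * B).1 * ha +
      trace B.1 ^ 2 * hinv
  rcases mul_eq_zero.1 hfactor with h | h
  · exact ⟨a, ha₀, ha, sub_eq_zero.1 h⟩
  · exact ⟨a⁻¹, inv_ne_zero ha₀, by rw [ha, inv_inv, add_comm], sub_eq_zero.1 h⟩

end CommutatorParameter

section NormalForm

lemma exists_forall_conj_eq_of_mul_eq {ι K : Type*} [Fintype ι] [DecidableEq ι] [Nonempty ι]
    [Field K] [IsAlgClosed K] {M : Matrix ι ι K} (hM : M.det ≠ 0) :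
    ∃ P : Matrix.SpecialLinearGroup ι K, ∀ X Y : Matrix.SpecialLinearGroup ι K,
      X.1 * M = M * Y.1 → P * X * P⁻¹ = Y := by
  obtain ⟨c, hc⟩ := IsAlgClosed.exists_pow_nat_eq M.det (Fintype.card_pos (α := ι))
  let Q : Matrix.SpecialLinearGroup ι K := ⟨c⁻¹ • M, by
    rw [det_smul, inv_pow, hc, inv_mul_cancel₀ hM]⟩
  refine ⟨Q⁻¹, fun X Y h ↦ ?_⟩
  rw [inv_inv, mul_assoc, inv_mul_eq_iff_eq_mul]
  refine Subtype.ext ?_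
  rw [coe_mul, coe_mul]
  change X.1 * (c⁻¹ • M) = c⁻¹ • M * Y.1
  rw [Matrix.mul_smul, Matrix.smul_mul, h]

lemma mul_mul_self_eq_zero {R : Type*} [CommRing R] {N B : Matrix (Fin 2) (Fin 2) R}
    (hN : N.det = 0) (hNB : trace (N * B) = 0) : N * B * N = 0 := by
  rw [det_fin_two] at hN
  simp only [trace_fin_two, Matrix.mul_apply, Fin.sum_univ_two] at hNB
  ext i j
  fin_cases i <;> fin_cases j <;>
    simp only [Matrix.mul_apply, Fin.sum_univ_two, Fin.zero_eta, Fin.mk_one, Matrix.zero_apply]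
  · linear_combination N 0 0 * hNB - B 1 1 * hN
  · linear_combination N 0 1 * hNB + B 0 1 * hN
  · linear_combination N 1 0 * hNB + B 1 0 * hN
  · linear_combination N 1 1 * hNB - B 0 0 * hN

lemma mul_transpose_eq_of_mulVec_eq {R : Type*} [CommSemiring R] {X : Matrix (Fin 2) (Fin 2) R}
    {u v : Fin 2 → R} {x y z w : R} (hu : X *ᵥ u = x • u + z • v) (hv : X *ᵥ v = y • u + w • v) :
    X * (of ![u, v])ᵀ = (of ![u, v])ᵀ * !![x, y; z, w] := by
  ext i j
  fin_cases j
  · simpa [Matrix.mul_apply, mulVec, dotProduct, mul_comm] using congrFun hu i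
  · simpa [Matrix.mul_apply, mulVec, dotProduct, mul_comm] using congrFun hv i

variable {K : Type*} [Field K]

lemma exists_mulVec_eq_smul_and_mulVec_mulVec_eq_smul {A B : Matrix (Fin 2) (Fin 2) K} {b c : K}
    (hbc : b ≠ c) (htr : trace A = b + c) (hdet : A.det = b * c)
    (hAB : trace (A * B) = b * trace B) :
    ∃ v ≠ 0, A *ᵥ v = c • v ∧ A *ᵥ (B *ᵥ v) = b • (B *ᵥ v) := by
  set N := A - b • (1 : Matrix (Fin 2) (Fin 2) K) with hN
  have hcayley : (A - c • (1 : Matrix (Fin 2) (Fin 2) K)) * N = 0 := by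
    rw [hN, sub_mul, mul_sub, mul_self_eq_trace_smul_sub_det_smul_one, htr, hdet]
    simp only [Matrix.smul_mul, Matrix.mul_smul, Matrix.one_mul, Matrix.mul_one]
    module
  have hdetN : N.det = 0 := by
    rw [trace_fin_two] at htr
    rw [det_fin_two] at hdet
    simp only [hN, det_fin_two, Matrix.sub_apply, Matrix.smul_apply, one_apply_eq,
      one_apply_ne zero_ne_one, one_apply_ne one_ne_zero, smul_eq_mul]
    linear_combination hdet - b * htr
  have hNB : trace (N * B) = 0 := by
    rw [hN, Matrix.sub_mul, Matrix.smul_mul, Matrix.one_mul, trace_sub, trace_smul, hAB,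
      smul_eq_mul, sub_self]
  have hN₀ : N ≠ 0 := fun h ↦ hbc <| by
    rw [sub_eq_zero.1 h, trace_smul, trace_one, Fintype.card_fin, smul_eq_mul] at htr
    linear_combination htr
  obtain ⟨w, hw⟩ : ∃ w, N *ᵥ w ≠ 0 := by
    by_contra! h
    exact hN₀ (ext_of_mulVec_single fun i ↦ by rw [h, zero_mulVec])
  refine ⟨N *ᵥ w, hw, ?_, ?_⟩
  · have h : (A - c • 1) *ᵥ (N *ᵥ w) = 0 := by rw [mulVec_mulVec, hcayley, zero_mulVec]
    simpa [sub_mulVec, sub_eq_zero, smul_mulVec] using h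
  · have h : N *ᵥ (B *ᵥ (N *ᵥ w)) = 0 := by
      rw [mulVec_mulVec, mulVec_mulVec, mul_mul_self_eq_zero hdetN hNB, zero_mulVec]
    simpa [hN, sub_mulVec, sub_eq_zero, smul_mulVec] using h

lemma det_ne_zero_of_mulVec_eq_smul {A : Matrix (Fin 2) (Fin 2) K} {b c : K} (hbc : b ≠ c)
    {u v : Fin 2 → K} (hu : A *ᵥ u = b • u) (hv : A *ᵥ v = c • v) (hu₀ : u ≠ 0) (hv₀ : v ≠ 0) :
    (of ![u, v])ᵀ.det ≠ 0 := by
  have hlin : LinearIndependent K ![u, v] :=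
    Module.End.eigenvectors_linearIndependent' (toLin' A) ![b, c]
      (by simpa using hbc) _ (by
        intro i
        fin_cases i
        · exact ⟨Module.End.mem_eigenspace_iff.2 hu, hu₀⟩
        · exact ⟨Module.End.mem_eigenspace_iff.2 hv, hv₀⟩)
  rw [det_transpose, ← isUnit_iff_ne_zero, ← isUnit_iff_isUnit_det,
    ← linearIndependent_rows_iff_isUnit]
  exact hlin

theorem exists_conj_eq_diag2_and_coe_conj_eq [IsAlgClosed K] {A B : SL(2, K)} {a : K} (ha₀ : a ≠ 0)
    (ha : a ^ 2 ≠ 1) (hA : trace A.1 = a + a⁻¹) (hAB : trace (A * B).1 = a * trace B.1) :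
    ∃ P : SL(2, K), P * A * P⁻¹ = diag2 a ha₀ ∧
      (P * B * P⁻¹).1 = !![trace B.1, 1; -1, 0] := by
  have haa : a ≠ a⁻¹ := by rwa [ne_eq, ← mul_eq_one_iff_eq_inv₀ ha₀, ← sq]
  obtain ⟨v, hv₀, hv, hBv⟩ := exists_mulVec_eq_smul_and_mulVec_mulVec_eq_smul haa hA
    (by rw [A.det_coe, mul_inv_cancel₀ ha₀]) hAB
  have hBv₀ : B.1 *ᵥ v ≠ 0 := fun h ↦ hv₀ <|
    eq_zero_of_mulVec_eq_zero (by rw [B.det_coe]; exact one_ne_zero) h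
  have hBBv : B.1 *ᵥ (B.1 *ᵥ v) = trace B.1 • (B.1 *ᵥ v) - v := by
    rw [mulVec_mulVec, mul_self_eq_trace_smul_sub_det_smul_one, B.det_coe, one_smul, sub_mulVec,
      smul_mulVec, one_mulVec]
  obtain ⟨P, hP⟩ := exists_forall_conj_eq_of_mul_eq
    (det_ne_zero_of_mulVec_eq_smul haa hBv hv hBv₀ hv₀)
  let B' : SL(2, K) := ⟨!![trace B.1, 1; -1, 0], by simp⟩
  refine ⟨P, hP _ _ ?_, congrArg Subtype.val (hP B B' ?_)⟩
  · rw [diag2_coe']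
    exact mul_transpose_eq_of_mulVec_eq (by rw [hBv, zero_smul, add_zero])
      (by rw [hv, zero_smul, zero_add])
  · exact mul_transpose_eq_of_mulVec_eq (by rw [hBBv, neg_one_smul, sub_eq_add_neg])
      (by rw [one_smul, zero_smul, add_zero])

end NormalForm

section NormalFormDiscreteness

variable {K : Type*} [Field K]

lemma diag2_conj_translation {a : K} (ha : a ≠ 0) (τ : K) :
    diag2 a ha * translation τ * (diag2 a ha)⁻¹ = translation (a ^ 2 * τ) := by
  apply Subtype.ext
  rw [coe_mul, coe_mul, coe_inv, diag2_coe', coe_translation, coe_translation,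
    adjugate_fin_two_of, mul_fin_two, mul_fin_two]
  ext i j
  fin_cases i <;> fin_cases j <;> simp [ha]
  ring

lemma sq_mul_mem_translationSubgroup {Γ : Subgroup SL(2, K)} {a : K} {ha : a ≠ 0}
    (hA : diag2 a ha ∈ Γ) {τ : K} (hτ : τ ∈ translationSubgroup Γ) :
    a ^ 2 * τ ∈ translationSubgroup Γ := by
  change translation _ ∈ Γ
  rw [← diag2_conj_translation ha]
  exact Γ.mul_mem (Γ.mul_mem hA hτ) (Γ.inv_mem hA)

lemma diag2_mul_conj_diag2 {a p : K} (ha : a ≠ 0) {B : SL(2, K)} (hB : B.1 = !![p, 1; -1, 0]) :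
    diag2 a ha * (B * diag2 a ha * B⁻¹) = translation ((1 - a ^ 2) * p) := by
  apply Subtype.ext
  rw [coe_mul, coe_mul, coe_mul, coe_inv, diag2_coe', coe_translation, hB, adjugate_fin_two_of,
    mul_fin_two, mul_fin_two, mul_fin_two]
  ext i j
  fin_cases i <;> fin_cases j <;> simp [ha]
  field_simp
  ring

lemma one_le_norm_one_sub_sq_mul {𝕜 : Type*} [NormedField 𝕜] {Γ : Subgroup SL(2, 𝕜)}
    [DiscreteTopology Γ] {a p : 𝕜} (ha₂ : a ^ 2 ≠ 1) (hp : p ≠ 0)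
    (hτ : (1 - a ^ 2) * p ∈ translationSubgroup Γ) {B : SL(2, 𝕜)} (hBΓ : B ∈ Γ)
    (hB : B.1 = !![p, 1; -1, 0]) : 1 ≤ ‖1 - a ^ 2‖ * ‖p‖ ^ 2 := by
  have hBB : (B * B).1 1 0 = -p := by
    rw [coe_mul, hB, mul_fin_two]
    simp
  have h := one_le_norm_lowerLeft_mul_of_translation_mem hτ
    (mul_ne_zero (sub_ne_zero.2 ha₂.symm) hp) (Γ.mul_mem hBΓ hBΓ)
    (by rw [hBB]; exact neg_ne_zero.2 hp)
  rw [hBB, norm_mul, norm_neg, norm_mul] at h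
  linarith

theorem eq_three_or_four_or_six_and_one_le_norm {Γ : Subgroup SL2C} (hΓ : IsDiscreteSubgroup Γ)
    {a p : ℂ} {ha₀ : a ≠ 0} {n : ℕ} (hn : 3 ≤ n) (ha : IsPrimitiveRoot (a ^ 2) n)
    (hA : diag2 a ha₀ ∈ Γ) {B : SL2C} (hBΓ : B ∈ Γ) (hB : B.1 = !![p, 1; -1, 0]) (hp : p ≠ 0) :
    (n = 3 ∨ n = 4 ∨ n = 6) ∧ 1 ≤ ‖1 - a ^ 2‖ * ‖p‖ ^ 2 := by
  have ha₂ : a ^ 2 ≠ 1 := ha.ne_one (by omega)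
  -- `SL2C` carries its own topology instance, only definitionally equal to Mathlib's.
  have hL := @discreteTopology_translationSubgroup ℂ _ _ Γ hΓ
  have hτ : (1 - a ^ 2) * p ∈ translationSubgroup Γ := by
    change translation _ ∈ Γ
    rw [← diag2_mul_conj_diag2 ha₀ hB]
    exact Γ.mul_mem hA (Γ.mul_mem (Γ.mul_mem hBΓ hA) (Γ.inv_mem hBΓ))
  have hbot : translationSubgroup Γ ≠ ⊥ := fun h ↦
    mul_ne_zero (sub_ne_zero.2 ha₂.symm) hp (by simpa [h] using hτ)
  obtain ⟨hn₇, hn₅⟩ := crystallographic_restriction hbot ha fun τ ↦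
    sq_mul_mem_translationSubgroup hA
  exact ⟨by omega, @one_le_norm_one_sub_sq_mul ℂ _ Γ hΓ _ _ ha₂ hp hτ _ hBΓ hB⟩

end NormalFormDiscreteness

/-- Theorem 5.2: displacement bound when `γ(A,B) = β(A)` and the group is not dihedral. -/
theorem margulis_parabolic_commutator_case (A B : SL2C) (n : ℕ) (hn : 3 ≤ n)
    (hd : IsDiscreteSubgroup (Subgroup.closure {A, B}))
    (hnd : ¬ ∃ m : ℕ, Nonempty (↥(pslImage (Subgroup.closure {A, B})) ≃* DihedralGroup m))
    (hA : IsEllipticOfOrder A n)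
    (hγ : γp A B = βp A) :
    ∀ C : SL2C,
      max (fnorm ((C * A * C⁻¹ : SL2C) : Matrix (Fin 2) (Fin 2) ℂ) ^ 2)
      (fnorm ((C * B * C⁻¹ : SL2C) : Matrix (Fin 2) (Fin 2) ℂ) ^ 2) ≥ 2 * tOf n := by
  intro C
  have horder : orderOf (A : PSL2C) = n := hA.orderOf_eq (by omega)
  have hB : trace B.1 ≠ 0 := trace_ne_zero_of_not_dihedral (by omega) hnd hγ
  obtain ⟨a, ha₀, htrA, htrAB⟩ := exists_eigenvalue_trace_mul_eq hγ
  obtain ⟨P, hPA, hPB⟩ := exists_conj_eq_diag2_and_coe_conj_eq ha₀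
    (hA.sq_ne_one (by omega) ha₀ htrA) htrA htrAB
  have ha : IsPrimitiveRoot (a ^ 2) n := by
    rw [IsPrimitiveRoot.iff_orderOf, ← orderOf_mk_diag2 ha₀, ← hPA, orderOf_mk_conj, horder]
  obtain ⟨hn', hp⟩ := eq_three_or_four_or_six_and_one_le_norm (hd.conj P) hn ha
    (hPA ▸ conj_mem_smul (Subgroup.subset_closure (Set.mem_insert A _)))
    (conj_mem_smul (Subgroup.subset_closure (Set.mem_insert_of_mem A rfl))) hPB hB
  obtain ⟨z, s, hs, hnorm⟩ := exists_fnorm_sq_conj_eq_conjNormSq (C * P⁻¹)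
  have hconj (X : SL2C) : C * X * C⁻¹ = C * P⁻¹ * (P * X * P⁻¹) * (C * P⁻¹)⁻¹ := by group
  rw [hconj A, hconj B, hnorm, hnorm, hPA, hPB, diag2_coe']
  exact two_mul_tOf_le_max_conjNormSq hs.ne' hn' ha hp

end
end

section
/- Let A, H ∈ SL(2,ℂ) with A elliptic of order n ≥ 3 and H = C·A·C⁻¹ or H = −C·A·C⁻¹ for some C ∈ SL(2,ℂ) (so A and H are conjugate elliptics of order n). If the image in PSL(2,ℂ) of the subgroup generated by A and H is isomorphic to the alternating group A₄, then γ(A,H) = −2 and β(A) = β(H) = −3. -/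
open Matrix Real

noncomputable section

/-!
Both parameters are read off from orders in `PSL(2, ℂ)`. By Cayley–Hamilton, `g² + 1 = (tr g) g` and
`g³ + tr g = (tr² g - 1) g` for `g ∈ SL₂`. Hence a noncentral `g` whose square is central has trace
`0`, and one whose cube is central has `tr² g = 1`. In `A₄` the commutator of two generators is a
nontrivial element of the Klein four-group, so it has order `2`, whence `γ(A, H) = 0 - 2`. An
element of `A₄` whose square is nontrivial has order `3`, whence `β(A) = 1 - 4`.
-/

section AlternatingGroupFour

open scoped commutatorElement

variable {G : Type*} [Group G]

theorem pow_three_eq_one_of_mulEquiv_alternatingGroup (e : G ≃* alternatingGroup (Fin 4)) {a : G}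
    (ha : a ^ 2 ≠ 1) : a ^ 3 = 1 := by
  have orders : ∀ b : alternatingGroup (Fin 4), b ^ 2 ≠ 1 → b ^ 3 = 1 := by decide +kernel
  rw [Ne, ← e.map_eq_one_iff, map_pow] at ha
  exact e.map_eq_one_iff.mp ((map_pow e a 3).trans (orders (e a) ha))

theorem commutatorElement_sq_eq_one_of_mulEquiv_alternatingGroup
    (e : G ≃* alternatingGroup (Fin 4)) (a b : G) : ⁅a, b⁆ ^ 2 = 1 := by
  have hcard : Nat.card (Fin 4) = 4 := Nat.card_fin 4
  have hmem : ⁅e a, e b⁆ ∈ alternatingGroup.kleinFour (Fin 4) := by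
    rw [alternatingGroup.kleinFour_eq_commutator hcard]
    exact Subgroup.commutator_mem_commutator (Subgroup.mem_top _) (Subgroup.mem_top _)
  have hexponent : ⁅e a, e b⁆ ^ 2 = 1 := by
    rw [← alternatingGroup.exponent_kleinFour_of_card_eq_four hcard]
    exact congrArg Subtype.val (Monoid.pow_exponent_eq_one
      (⟨⁅e a, e b⁆, hmem⟩ : alternatingGroup.kleinFour (Fin 4)))
  rwa [← e.map_eq_one_iff, map_pow, map_commutatorElement]

theorem not_isMulCommutative_of_mulEquiv_alternatingGroup (e : G ≃* alternatingGroup (Fin 4)) :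
    ¬ IsMulCommutative G := fun _ ↦ by
  have hcomm : IsMulCommutative (alternatingGroup (Fin 4)) :=
    isMulCommutative_iff.mpr fun x y ↦ e.symm.injective (by rw [map_mul, map_mul, mul_comm'])
  simpa using alternatingGroup.isMulCommutative_iff_card_le_three.mp hcomm

theorem commutatorElement_ne_one_of_not_isMulCommutative_closure {a b : G}
    (h : ¬ IsMulCommutative (Subgroup.closure {a, b})) : ⁅a, b⁆ ≠ 1 := fun hab ↦ h <| by
  have hcomm : a * b = b * a := commutatorElement_eq_one_iff_mul_comm.mp hab
  apply Subgroup.isMulCommutative_closure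
  rintro _ (rfl | rfl) _ (rfl | rfl)
  exacts [rfl, hcomm, hcomm.symm, rfl]

end AlternatingGroupFour

section CenterAndTrace

variable {n R : Type*} [Fintype n] [DecidableEq n] [CommRing R]

theorem coe_mem_subalgebra_center_iff {g : Matrix.SpecialLinearGroup n R} :
    g.1 ∈ Subalgebra.center R (Matrix n n R) ↔ g ∈ Subgroup.center _ := by
  rw [Subalgebra.mem_center_iff]
  refine ⟨fun h ↦ Subgroup.mem_center_iff.mpr fun k ↦ Subtype.ext (h k), fun h ↦ ?_⟩
  obtain ⟨r, -, hr⟩ := Matrix.SpecialLinearGroup.mem_center_iff.mp h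
  exact fun M ↦ hr ▸ (Matrix.scalar_commute r (Commute.all r) M).symm

theorem eq_one_or_eq_neg_one_of_mem_center [NoZeroDivisors R]
    {g : Matrix.SpecialLinearGroup (Fin 2) R} (hg : g ∈ Subgroup.center _) : g = 1 ∨ g = -1 := by
  obtain ⟨r, hr, hrg⟩ := Matrix.SpecialLinearGroup.mem_center_iff.mp hg
  rcases sq_eq_one_iff.mp hr with rfl | rfl
  · exact Or.inl (Subtype.ext (hrg.symm.trans (map_one _)))
  · exact Or.inr (Subtype.ext (hrg.symm.trans (by rw [map_neg, map_one]; rfl)))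

theorem coe_sq_add_one_eq_trace_smul (g : Matrix.SpecialLinearGroup (Fin 2) R) :
    g.1 ^ 2 + 1 = trace g.1 • g.1 := by
  nontriviality R
  have cayleyHamilton := Matrix.aeval_self_charpoly g.1
  simp only [charpoly_fin_two, Matrix.SpecialLinearGroup.det_coe, map_one, map_add,
    Polynomial.aeval_sub, map_pow, Polynomial.aeval_X, map_mul, Polynomial.aeval_C,
    ← Algebra.smul_def] at cayleyHamilton
  rw [← sub_eq_zero, ← cayleyHamilton]
  abel

theorem coe_pow_three_add_trace_eq_smul (g : Matrix.SpecialLinearGroup (Fin 2) R) :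
    g.1 ^ 3 + trace g.1 • 1 = (trace g.1 ^ 2 - 1) • g.1 := by
  have hsq := eq_sub_of_add_eq (coe_sq_add_one_eq_trace_smul g)
  calc g.1 ^ 3 + trace g.1 • 1 = g.1 ^ 2 * g.1 + trace g.1 • 1 := by rw [pow_succ g.1 2]
    _ = trace g.1 • g.1 ^ 2 - g.1 + trace g.1 • 1 := by
      rw [hsq, sub_mul, one_mul, smul_mul_assoc, ← sq, hsq]
    _ = (trace g.1 ^ 2 - 1) • g.1 := by rw [hsq]; module

variable {K : Type*} [Field K] {g : Matrix.SpecialLinearGroup (Fin 2) K}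

theorem trace_eq_zero_of_sq_mem_center (hg : g ∉ Subgroup.center _)
    (hsq : g ^ 2 ∈ Subgroup.center _) : trace g.1 = 0 := by
  by_contra htrace
  rw [← coe_mem_subalgebra_center_iff] at hg hsq
  have hsmul := add_mem hsq (one_mem _)
  rw [Matrix.SpecialLinearGroup.coe_pow, coe_sq_add_one_eq_trace_smul] at hsmul
  exact hg (((Subalgebra.center K _).toSubmodule.smul_mem_iff htrace).mp hsmul)

theorem trace_sq_eq_one_of_pow_three_mem_center (hg : g ∉ Subgroup.center _)
    (hcube : g ^ 3 ∈ Subgroup.center _) : trace g.1 ^ 2 = 1 := by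
  by_contra htrace
  rw [← coe_mem_subalgebra_center_iff] at hg hcube
  have hsmul := add_mem hcube (Subalgebra.smul_mem _ (one_mem _) (trace g.1))
  rw [Matrix.SpecialLinearGroup.coe_pow, coe_pow_three_add_trace_eq_smul] at hsmul
  exact hg (((Subalgebra.center K _).toSubmodule.smul_mem_iff (sub_ne_zero.mpr htrace)).mp hsmul)

theorem trace_conj_eq_trace (C A : Matrix.SpecialLinearGroup n R) :
    trace (C * A * C⁻¹ : Matrix.SpecialLinearGroup n R).1 = trace A.1 := by
  calc trace (C * A * C⁻¹ : Matrix.SpecialLinearGroup n R).1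
      = trace (C⁻¹ * (C * A) : Matrix.SpecialLinearGroup n R).1 := trace_mul_comm (C * A).1 C⁻¹.1
    _ = trace A.1 := congrArg (fun M ↦ trace M.1) (inv_mul_cancel_left C A)

end CenterAndTrace

section Parameters

open scoped commutatorElement

theorem IsEllipticOfOrder.pow_notMem_center {A : SL2C} {n k : ℕ} (hA : IsEllipticOfOrder A n)
    (hk : 1 ≤ k) (hkn : k < n) : A ^ k ∉ Subgroup.center SL2C := fun hmem ↦
  (eq_one_or_eq_neg_one_of_mem_center hmem).elim (hA.2 k hk hkn).1 (hA.2 k hk hkn).2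

theorem pslImage_closure_pair (A H : SL2C) :
    pslImage (Subgroup.closure {A, H}) = Subgroup.closure {(A : PSL2C), (H : PSL2C)} := by
  rw [pslImage, MonoidHom.map_closure, Set.image_pair]
  rfl

theorem βp_eq_of_eq_conj_or_eq_neg_conj {A H : SL2C}
    (h : ∃ C : SL2C, H = C * A * C⁻¹ ∨ H = -(C * A * C⁻¹)) : βp H = βp A := by
  obtain ⟨C, rfl | rfl⟩ := h
  · rw [βp, trace_conj_eq_trace, βp]
  · rw [βp, Matrix.SpecialLinearGroup.coe_neg, trace_neg, neg_sq, trace_conj_eq_trace, βp]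

theorem βp_eq_neg_three_of_mulEquiv_alternatingGroup {Γ : Subgroup SL2C} {A : SL2C}
    (e : pslImage Γ ≃* alternatingGroup (Fin 4)) (hA : A ∈ Γ)
    (hsq : A ^ 2 ∉ Subgroup.center SL2C) : βp A = -3 := by
  let a : pslImage Γ := ⟨(A : PSL2C), Subgroup.mem_map_of_mem _ hA⟩
  have ha : a ^ 2 ≠ 1 := fun h ↦
    hsq ((QuotientGroup.eq_one_iff (A ^ 2)).mp (congrArg Subtype.val h))
  have hcube : A ^ 3 ∈ Subgroup.center SL2C := (QuotientGroup.eq_one_iff (A ^ 3)).mp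
    (congrArg Subtype.val (pow_three_eq_one_of_mulEquiv_alternatingGroup e ha))
  have htrace := trace_sq_eq_one_of_pow_three_mem_center (fun h ↦ hsq (pow_mem h 2)) hcube
  rw [βp, htrace]
  norm_num

theorem γp_eq_neg_two_of_mulEquiv_alternatingGroup {A H : SL2C}
    (e : pslImage (Subgroup.closure {A, H}) ≃* alternatingGroup (Fin 4)) : γp A H = -2 := by
  rw [pslImage_closure_pair] at e
  have hne : ⁅A, H⁆ ∉ Subgroup.center SL2C := fun h ↦
    commutatorElement_ne_one_of_not_isMulCommutative_closure
      (not_isMulCommutative_of_mulEquiv_alternatingGroup e)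
      ((QuotientGroup.eq_one_iff ⁅A, H⁆).mpr h)
  have hsq : ⁅A, H⁆ ^ 2 ∈ Subgroup.center SL2C := (QuotientGroup.eq_one_iff (⁅A, H⁆ ^ 2)).mp
    (congrArg Subtype.val (commutatorElement_sq_eq_one_of_mulEquiv_alternatingGroup e
      ⟨(A : PSL2C), Subgroup.subset_closure (by simp)⟩
      ⟨(H : PSL2C), Subgroup.subset_closure (by simp)⟩))
  rw [γp, ← commutatorElement_def, trace_eq_zero_of_sq_mem_center hne hsq, zero_sub]

end Parameters

/-- Lemma 4.8, `A₄` case: parameters of `A₄` with conjugate elliptic generators. -/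
theorem params_A4 (A H : SL2C) (n : ℕ) (hn : 3 ≤ n)
    (hA : IsEllipticOfOrder A n)
    (hconj : ∃ C : SL2C, H = C * A * C⁻¹ ∨ H = -(C * A * C⁻¹))
    (hiso : Nonempty (↥(pslImage (Subgroup.closure {A, H})) ≃* ↥(alternatingGroup (Fin 4)))) :
    γp A H = -2 ∧ βp A = -3 ∧ βp H = -3 := by
  obtain ⟨e⟩ := hiso
  have hβA : βp A = -3 :=
    βp_eq_neg_three_of_mulEquiv_alternatingGroup e (Subgroup.subset_closure (by simp))
      (hA.pow_notMem_center one_le_two hn)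
  have hβH : βp H = -3 := (βp_eq_of_eq_conj_or_eq_neg_conj hconj).trans hβA
  exact ⟨γp_eq_neg_two_of_mulEquiv_alternatingGroup e, hβA, hβH⟩

end
end
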